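/- Let K = cos(2π/5). Let c and e be the unique nonnegative reals with cosh c = K+1 and cosh e = (2K+1)·√(K+1). Then 2e > 3c. -/

import Mathlib

/-!
Since `cosh` is increasing on `[0, ∞)`, it suffices to compare `cosh (2e)` and `cosh (3c)`. The
multiple-angle formulas turn both into polynomials in `K`, with difference `K (2K + 1)²`. This is
positive because `2π/5 < π/2`; the exact value of `K` plays no role.
-/

/-- Claim (4) in the proof of Proposition 5.3 of the paper: `2e > 3c`, where
`K = cos (2π/5)`, `cosh c = K+1` and `cosh e = (2K+1)√(K+1)` with `c, e ≥ 0`. -/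
theorem two_e_gt_three_c (K c e : ℝ)
    (hK : K = Real.cos (2 * Real.pi / 5))
    (hc0 : 0 ≤ c) (hc : Real.cosh c = K + 1)
    (he0 : 0 ≤ e) (he : Real.cosh e = (2 * K + 1) * Real.sqrt (K + 1)) :
    2 * e > 3 * c := by
  have hK0 : 0 < K := by
    rw [hK]
    apply Real.cos_pos_of_mem_Ioo
    constructor <;> linarith [Real.pi_pos]
  have h2e : Real.cosh (2 * e) = 2 * ((2 * K + 1) ^ 2 * (K + 1)) - 1 := by
    have hsq : Real.cosh e ^ 2 = (2 * K + 1) ^ 2 * (K + 1) := by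
      rw [he, mul_pow, Real.sq_sqrt (by linarith)]
    linarith [Real.cosh_two_mul e, Real.cosh_sq e]
  have h3c : Real.cosh (3 * c) = 4 * (K + 1) ^ 3 - 3 * (K + 1) := by
    rw [Real.cosh_three_mul, hc]
  have hlt : Real.cosh (3 * c) < Real.cosh (2 * e) := by
    -- `K (2K + 1)²` is exactly `cosh (2e) - cosh (3c)`.
    have hpos : 0 < K * (2 * K + 1) ^ 2 := by positivity
    rw [h2e, h3c]
    linarith
  rw [Real.cosh_lt_cosh, abs_of_nonneg (by positivity), abs_of_nonneg (by positivity)] at hlt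
  exact hlt
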